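/- Let X be a KU-algebra, d a derivation of X, and β a fuzzy set on X. Let μ_β be the strongest fuzzy relation on X, μ_β(x, y) = min(β(x), β(y)), and let D be the self map of the product KU-algebra X × X given by D(x, y) = (d(x), d(y)). Then β is a fuzzy left derivations KU-ideal of X with respect to d if and only if μ_β is a fuzzy left derivations KU-ideal of X × X with respect to D. -/

import Mathlib

/-! The operation, the constant and `D` on `X × X` are all componentwise, so for the forward
direction the inequalities for `min (β x) (β y)` are minima of the inequalities for `β` in each
coordinate. Conversely `min (β x) (β x) = β x`, so restricting the inequalities on `X × X` to the
diagonal gives those for `β`. -/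

/-- A KU-algebra: a set `X` with a binary operation `⋆` and a constant `𝟎` satisfying
(KU1) `(x⋆y)⋆((y⋆z)⋆(x⋆z)) = 𝟎`, (KU2) `x⋆𝟎 = 𝟎`, (KU3) `𝟎⋆x = x`,
(KU4) `x⋆y = 𝟎` and `y⋆x = 𝟎` imply `x = y`. -/
class KUAlgebra (X : Type*) where
  star : X → X → X
  zero : X
  ku1 : ∀ x y z : X, star (star x y) (star (star y z) (star x z)) = zero
  ku2 : ∀ x : X, star x zero = zero
  ku3 : ∀ x : X, star zero x = x
  ku4 : ∀ x y : X, star x y = zero → star y x = zero → x = y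

infixl:70 " ⋆ " => KUAlgebra.star
notation "𝟎" => KUAlgebra.zero

/-- The order `x ≤ y ↔ y ⋆ x = 𝟎` on a KU-algebra. -/
def KUle {X : Type*} [KUAlgebra X] (x y : X) : Prop := y ⋆ x = 𝟎

/-- `x ∧ y := (x ⋆ y) ⋆ y` in a KU-algebra. -/
def KUwedge {X : Type*} [KUAlgebra X] (x y : X) : X := (x ⋆ y) ⋆ y

/-- An (ℓ,r)-derivation: `d(x⋆y) = (d(x)⋆y) ∧ (x⋆d(y))`. -/
def IsLRDeriv {X : Type*} [KUAlgebra X] (d : X → X) : Prop :=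
  ∀ x y : X, d (x ⋆ y) = KUwedge (d x ⋆ y) (x ⋆ d y)

/-- An (r,ℓ)-derivation: `d(x⋆y) = (x⋆d(y)) ∧ (d(x)⋆y)`. -/
def IsRLDeriv {X : Type*} [KUAlgebra X] (d : X → X) : Prop :=
  ∀ x y : X, d (x ⋆ y) = KUwedge (x ⋆ d y) (d x ⋆ y)

/-- A derivation is both an (ℓ,r)- and an (r,ℓ)-derivation. -/
def IsDeriv {X : Type*} [KUAlgebra X] (d : X → X) : Prop := IsLRDeriv d ∧ IsRLDeriv d

/-- A fuzzy left derivations KU-ideal of `X` with respect to a self map `d`: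
a fuzzy set `μ : X → [0,1]` with `μ 𝟎 ≥ μ x` and
`μ (d (x ⋆ z)) ≥ min (μ (d x ⋆ (y ⋆ z))) (μ (d y))`. -/
def IsFuzzyLeftDerivKUIdeal {X : Type*} [KUAlgebra X] (d : X → X) (μ : X → ℝ) : Prop :=
  (∀ x : X, μ x ∈ Set.Icc (0 : ℝ) 1) ∧
  (∀ x : X, μ 𝟎 ≥ μ x) ∧
  (∀ x y z : X, μ (d (x ⋆ z)) ≥ min (μ (d x ⋆ (y ⋆ z))) (μ (d y)))

/-- A fuzzy right derivations KU-ideal of `X` with respect to a self map `d`: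
a fuzzy set `μ : X → [0,1]` with `μ 𝟎 ≥ μ x` and
`μ (d (x ⋆ z)) ≥ min (μ (x ⋆ d (y ⋆ z))) (μ (d y))`. -/
def IsFuzzyRightDerivKUIdeal {X : Type*} [KUAlgebra X] (d : X → X) (μ : X → ℝ) : Prop :=
  (∀ x : X, μ x ∈ Set.Icc (0 : ℝ) 1) ∧
  (∀ x : X, μ 𝟎 ≥ μ x) ∧
  (∀ x y z : X, μ (d (x ⋆ z)) ≥ min (μ (x ⋆ d (y ⋆ z))) (μ (d y)))

/-- The product of two KU-algebras, with componentwise operation and constant `(𝟎, 𝟎)`. -/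
instance instKUProd {X Y : Type*} [KUAlgebra X] [KUAlgebra Y] : KUAlgebra (X × Y) where
  star p q := (p.1 ⋆ q.1, p.2 ⋆ q.2)
  zero := (𝟎, 𝟎)
  ku1 p q r := by
    simp only [Prod.mk.injEq]
    exact ⟨KUAlgebra.ku1 _ _ _, KUAlgebra.ku1 _ _ _⟩
  ku2 p := by
    simp only [Prod.mk.injEq]
    exact ⟨KUAlgebra.ku2 _, KUAlgebra.ku2 _⟩
  ku3 p := Prod.ext (KUAlgebra.ku3 _) (KUAlgebra.ku3 _)
  ku4 p q h1 h2 := by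
    rw [Prod.ext_iff] at h1 h2
    exact Prod.ext (KUAlgebra.ku4 _ _ h1.1 h2.1) (KUAlgebra.ku4 _ _ h1.2 h2.2)

/-- `β` is a fuzzy left derivations KU-ideal of `X` with respect to a derivation `d`
if and only if the strongest fuzzy relation `μ_β(x,y) = min (β x) (β y)` is a fuzzy
left derivations KU-ideal of `X × X` with respect to `D(x,y) = (d x, d y)`. -/
theorem strongest_relation_ideal_iff {X : Type*} [KUAlgebra X]
    (d : X → X) (hd : IsDeriv d) (β : X → ℝ) (hβ : ∀ x : X, β x ∈ Set.Icc (0 : ℝ) 1) :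
    IsFuzzyLeftDerivKUIdeal d β ↔
      IsFuzzyLeftDerivKUIdeal (X := X × X) (fun p => (d p.1, d p.2))
        (fun p => min (β p.1) (β p.2)) := by
  constructor
  · rintro ⟨-, h0, h⟩
    refine ⟨fun p => ⟨le_min (hβ _).1 (hβ _).1, min_le_of_left_le (hβ _).2⟩,
      fun p => min_le_min (h0 _) (h0 _), fun p q r => ?_⟩
    -- Regroup the four-fold minimum by coordinates.
    exact (min_min_min_comm _ _ _ _).trans_le
      (min_le_min (h p.1 q.1 r.1) (h p.2 q.2 r.2))
  · rintro ⟨-, h0, h⟩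
    refine ⟨hβ, fun x => ?_, fun x y z => ?_⟩
    · have hx : min (β 𝟎) (β 𝟎) ≥ min (β x) (β x) := h0 (x, x)
      simpa only [min_self] using hx
    · have hxyz : min (β (d (x ⋆ z))) (β (d (x ⋆ z))) ≥
          min (min (β (d x ⋆ (y ⋆ z))) (β (d x ⋆ (y ⋆ z)))) (min (β (d y)) (β (d y))) :=
        h (x, x) (y, y) (z, z)
      simpa only [min_self] using hxyz
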